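/- arXiv:1705.09217 — 6 statements merged into one kernel-verified Lean document; each statement's English description precedes it below -/
import Mathlib

section
/- Let F be a field and let R = F⟨u, x, y⟩/⟨u² − u, ux − x, xu − x, uy − y, yu − y, xy − u⟩ be the quotient of the free associative unital F-algebra on three generators u, x, y by the two-sided ideal generated by the listed relations. Then in R one has xy = u but yx ≠ u. In particular, u is an idempotent of R and R is not directly finite with respect to the idempotent u. -/
/-- The defining relations of the algebra `R = F⟨u,x,y⟩ / ⟨u² = u, ux = xu = x,
uy = yu = y, xy = u⟩`, where the generators `u, x, y` are indexed by `0, 1, 2 : Fin 3`.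
Quotienting the free algebra by the congruence generated by these relations is the same
as quotienting by the two-sided ideal generated by the corresponding differences. -/
inductive BergmanRel (F : Type*) [Field F] :
    FreeAlgebra F (Fin 3) → FreeAlgebra F (Fin 3) → Prop
  | u_idem : BergmanRel F (FreeAlgebra.ι F 0 * FreeAlgebra.ι F 0) (FreeAlgebra.ι F 0)
  | ux : BergmanRel F (FreeAlgebra.ι F 0 * FreeAlgebra.ι F 1) (FreeAlgebra.ι F 1)
  | xu : BergmanRel F (FreeAlgebra.ι F 1 * FreeAlgebra.ι F 0) (FreeAlgebra.ι F 1)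
  | uy : BergmanRel F (FreeAlgebra.ι F 0 * FreeAlgebra.ι F 2) (FreeAlgebra.ι F 2)
  | yu : BergmanRel F (FreeAlgebra.ι F 2 * FreeAlgebra.ι F 0) (FreeAlgebra.ι F 2)
  | xy : BergmanRel F (FreeAlgebra.ι F 1 * FreeAlgebra.ι F 2) (FreeAlgebra.ι F 0)

/-- In `R = F⟨u,x,y⟩/⟨u²−u, ux−x, xu−x, uy−y, yu−y, xy−u⟩` one has `xy = u` but
`yx ≠ u`; in particular `u` is an idempotent and `R` is not directly finite with
respect to the idempotent `u`. -/
theorem stmt_5 (F : Type*) [Field F]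
    (u x y : RingQuot (BergmanRel F))
    (hu : u = RingQuot.mkRingHom (BergmanRel F) (FreeAlgebra.ι F 0))
    (hx : x = RingQuot.mkRingHom (BergmanRel F) (FreeAlgebra.ι F 1))
    (hy : y = RingQuot.mkRingHom (BergmanRel F) (FreeAlgebra.ι F 2)) :
    x * y = u ∧ y * x ≠ u ∧ u * u = u ∧
      ¬ (∀ a b : RingQuot (BergmanRel F),
          u * a = a → a * u = a → u * b = b → b * u = b → a * b = u → b * a = u) := by
  have hR := fun {a b} (h : BergmanRel F a b) => RingQuot.mkRingHom_rel h
  have huu : u * u = u := by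
    rw [hu, ← map_mul]; exact hR .u_idem
  have hux : u * x = x := by
    rw [hu, hx, ← map_mul]; exact hR .ux
  have hxu : x * u = x := by
    rw [hu, hx, ← map_mul]; exact hR .xu
  have huy : u * y = y := by
    rw [hu, hy, ← map_mul]; exact hR .uy
  have hyu : y * u = y := by
    rw [hu, hy, ← map_mul]; exact hR .yu
  have hxy : x * y = u := by
    rw [hu, hx, hy, ← map_mul]; exact hR .xy
  have hyx : y * x ≠ u := by
    -- represent the algebra on sequences by the two shift operators
    let X : Module.End F (ℕ → F) := LinearMap.funLeft F F Nat.succ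
    let Y : Module.End F (ℕ → F) :=
      { toFun := fun f n => Nat.casesOn n 0 f
        map_add' := by
          intro f g; funext n; cases n <;> simp
        map_smul' := by
          intro c f; funext n; cases n <;> simp }
    have hXY : X * Y = 1 := by
      ext f n; rfl
    let φ : FreeAlgebra F (Fin 3) →ₐ[F] Module.End F (ℕ → F) :=
      FreeAlgebra.lift F ![1, X, Y]
    have h0 : φ (FreeAlgebra.ι F 0) = 1 := by simp [φ]
    have h1 : φ (FreeAlgebra.ι F 1) = X := by simp [φ]
    have h2 : φ (FreeAlgebra.ι F 2) = Y := by simp [φ]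
    have hφ : ∀ ⦃a b⦄, BergmanRel F a b → φ.toRingHom a = φ.toRingHom b := by
      intro a b h
      cases h <;> simp [h0, h1, h2, hXY]
    let ψ := RingQuot.lift ⟨φ.toRingHom, hφ⟩
    have hψ : ∀ a, ψ (RingQuot.mkRingHom (BergmanRel F) a) = φ a := fun a =>
      RingQuot.lift_mkRingHom_apply _ hφ a
    intro h
    have h' := congrArg ψ h
    rw [hu, hx, hy, map_mul, hψ, hψ, hψ, h0, h1, h2] at h'
    have h3 := congrFun (LinearMap.congr_fun h' (fun _ => (1 : F))) 0
    exact zero_ne_one h3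
  exact ⟨hxy, hyx, huu, fun H => hyx (H x y hux hxu huy hyu hxy)⟩
end

section
/- Let F be a field and let R = F⟨u, x, y⟩/⟨u² − u, ux − x, xu − x, uy − y, yu − y, xy − u⟩ be the quotient of the free associative unital F-algebra on three generators u, x, y by the two-sided ideal generated by the listed relations. Then (x + u − 1)(y + u − 1) = 1 in R, but (y + u − 1)(x + u − 1) ≠ 1. In particular, R is not directly finite. -/
/-- In `R = F⟨u,x,y⟩/⟨u²−u, ux−x, xu−x, uy−y, yu−y, xy−u⟩` one has
`(x + u − 1)(y + u − 1) = 1` but `(y + u − 1)(x + u − 1) ≠ 1`; in particular `R` is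
not directly finite. -/
theorem stmt_6 (F : Type*) [Field F]
    (u x y : RingQuot (BergmanRel F))
    (hu : u = RingQuot.mkRingHom (BergmanRel F) (FreeAlgebra.ι F 0))
    (hx : x = RingQuot.mkRingHom (BergmanRel F) (FreeAlgebra.ι F 1))
    (hy : y = RingQuot.mkRingHom (BergmanRel F) (FreeAlgebra.ι F 2)) :
    (x + u - 1) * (y + u - 1) = 1 ∧ (y + u - 1) * (x + u - 1) ≠ 1 ∧
      ¬ (∀ a b : RingQuot (BergmanRel F), a * b = 1 → b * a = 1) := by
  have huu : u * u = u := by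
    rw [hu, ← map_mul]; exact RingQuot.mkRingHom_rel BergmanRel.u_idem
  have hux : u * x = x := by
    rw [hu, hx, ← map_mul]; exact RingQuot.mkRingHom_rel BergmanRel.ux
  have hxu : x * u = x := by
    rw [hu, hx, ← map_mul]; exact RingQuot.mkRingHom_rel BergmanRel.xu
  have huy : u * y = y := by
    rw [hu, hy, ← map_mul]; exact RingQuot.mkRingHom_rel BergmanRel.uy
  have hyu : y * u = y := by
    rw [hu, hy, ← map_mul]; exact RingQuot.mkRingHom_rel BergmanRel.yu
  have hxy : x * y = u := by
    rw [hu, hx, hy, ← map_mul]; exact RingQuot.mkRingHom_rel BergmanRel.xy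
  have h1 : (x + u - 1) * (y + u - 1) = 1 := by
    simp only [add_mul, sub_mul, mul_add, mul_sub, huu, hxu, huy, hxy, one_mul, mul_one]
    abel
  have h2 : (y + u - 1) * (x + u - 1) ≠ 1 := by
    intro h
    -- left and right shift on sequences
    let S : Module.End F (ℕ → F) := LinearMap.funLeft F F Nat.succ
    let T : Module.End F (ℕ → F) :=
      { toFun := fun f n => Nat.casesOn n 0 f
        map_add' := by intro f g; funext n; cases n <;> simp
        map_smul' := by intro c f; funext n; cases n <;> simp }
    have hST : S * T = 1 := by
      ext f n; rfl
    let φ : FreeAlgebra F (Fin 3) →ₐ[F] Module.End F (ℕ → F) :=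
      FreeAlgebra.lift F ![1, S, T]
    have hφ0 : φ (FreeAlgebra.ι F 0) = 1 := by simp [φ]
    have hφ1 : φ (FreeAlgebra.ι F 1) = S := by simp [φ]
    have hφ2 : φ (FreeAlgebra.ι F 2) = T := by simp [φ]
    have hrel : ∀ ⦃a b⦄, BergmanRel F a b → φ.toRingHom a = φ.toRingHom b := by
      intro a b hab
      change φ a = φ b
      cases hab <;> simp only [map_mul, hφ0, hφ1, hφ2, one_mul, mul_one, hST]
    let ψ := RingQuot.lift ⟨φ.toRingHom, hrel⟩
    have hψ : ∀ a, ψ (RingQuot.mkRingHom (BergmanRel F) a) = φ a := fun a =>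
      RingQuot.lift_mkRingHom_apply _ hrel a
    have h' := congrArg ψ h
    rw [hu, hx, hy] at h'
    simp only [map_mul, map_sub, map_add, map_one, hψ, hφ0, hφ1, hφ2, add_sub_cancel_right] at h'
    have h3 : (T * S) (fun _ => 1) 0 = (1 : Module.End F (ℕ → F)) (fun _ => 1) 0 := by rw [h']
    exact zero_ne_one h3
  exact ⟨h1, h2, fun H => h2 (H _ _ h1)⟩
end

section
/- Let R be a unital ring such that for every simple left R-module S and every index set ι, the direct sum S^{(ι)} of copies of S indexed by ι is an injective left R-module. Then R is directly finite: for all x, y ∈ R, xy = 1 implies yx = 1. -/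
universe u

/-- A module `Q` is injective if every `R`-linear map into `Q` extends along every
injective `R`-linear map. -/
def IsInjectiveModule (R : Type u) [Ring R] (Q : Type u) [AddCommGroup Q]
    [Module R Q] : Prop :=
  ∀ (M N : Type u) [AddCommGroup M] [AddCommGroup N] [Module R M] [Module R N]
    (f : M →ₗ[R] N), Function.Injective f →
      ∀ g : M →ₗ[R] Q, ∃ h : N →ₗ[R] Q, ∀ m : M, h (f m) = g m

/-- If every direct sum of copies of every simple left `R`-module is injective
(`R` is a Σ-V ring), then `R` is directly finite. -/
theorem stmt_8 {R : Type u} [Ring R]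
    (h : ∀ (S : Type u) [AddCommGroup S] [Module R S], IsSimpleModule R S →
      ∀ ι : Type u, IsInjectiveModule R (ι →₀ S)) :
    ∀ x y : R, x * y = 1 → y * x = 1 := by
  intro x y hxy
  by_contra hne
  obtain ⟨e, he⟩ : ∃ e : R, e = 1 - y * x := ⟨_, rfl⟩
  have he0 : e ≠ 0 := fun h0 => hne (sub_eq_zero.mp (he ▸ h0)).symm
  have hey : e * y = 0 := by rw [he, sub_mul, one_mul, mul_assoc, hxy, mul_one, sub_self]
  have hee : e * e = e := by
    nth_rewrite 2 [he]
    rw [mul_sub, mul_one, ← mul_assoc, hey, zero_mul, sub_zero]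
  have hpow : ∀ n : ℕ, x ^ n * y ^ n = 1 := by
    intro n
    induction n with
    | zero => simp
    | succ k ih =>
      rw [pow_succ, pow_succ', mul_assoc, ← mul_assoc x y, hxy, one_mul, ih]
  have hz : ∀ i j : ℕ, i < j → e * x ^ i * y ^ j * e = 0 := by
    intro i j hij
    obtain ⟨k, rfl⟩ : ∃ k, j = i + (k + 1) := ⟨j - i - 1, by omega⟩
    rw [pow_add, mul_assoc e, ← mul_assoc (x ^ i), hpow, one_mul, pow_succ', ← mul_assoc e, hey]
    simp
  have hd : ∀ i : ℕ, e * x ^ i * y ^ i * e = e := by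
    intro i
    rw [mul_assoc e, hpow, mul_one, hee]
  -- a maximal left ideal avoiding `e`
  have hprop : Ideal.span {1 - e} ≠ (⊤ : Ideal R) := by
    intro ht
    have h1 : (1 : R) ∈ Ideal.span {1 - e} := ht ▸ Submodule.mem_top
    obtain ⟨r, hr⟩ := Submodule.mem_span_singleton.mp h1
    apply he0
    have h2 : r * (1 - e) * e = 1 * e := congrArg (· * e) hr
    rw [mul_assoc, sub_mul, one_mul, hee, sub_self, mul_zero] at h2
    exact h2.symm
  obtain ⟨m, hm, hle⟩ := Ideal.exists_le_maximal _ hprop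
  have hem : e ∉ m := by
    intro hemem
    apply hm.ne_top
    rw [Ideal.eq_top_iff_one]
    have := m.add_mem (hle (Ideal.subset_span rfl)) hemem
    simpa using this
  have hS : IsSimpleModule R (R ⧸ m) := isSimpleModule_iff_isCoatom.mpr hm.out
  let I : Submodule R R :=
    { carrier := {a | ∃ n : ℕ, ∀ i, n ≤ i → a * y ^ i * e = 0}
      zero_mem' := ⟨0, fun i _ => by simp⟩
      add_mem' := by
        rintro a b ⟨n, hn⟩ ⟨k, hk⟩
        refine ⟨max n k, fun i hi => ?_⟩
        rw [add_mul, add_mul, hn i (le_trans (le_max_left _ _) hi),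
          hk i (le_trans (le_max_right _ _) hi), add_zero]
      smul_mem' := by
        rintro c a ⟨n, hn⟩
        refine ⟨n, fun i hi => ?_⟩
        rw [smul_eq_mul, mul_assoc c, mul_assoc c, hn i hi, mul_zero] }
  have hfin : ∀ a : I, (Function.support
      (fun i : ULift.{u} ℕ => m.mkQ ((a : R) * y ^ i.down * e))).Finite := by
    rintro ⟨a, n, hn⟩
    refine ((Set.finite_lt_nat n).preimage (ULift.down_injective.injOn)).subset ?_
    intro i hi
    by_contra hni
    apply hi
    have : n ≤ i.down := not_lt.mp hni
    change m.mkQ (a * y ^ i.down * e) = 0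
    rw [hn _ this, map_zero]
  let g : I →ₗ[R] (ULift.{u} ℕ →₀ (R ⧸ m)) :=
    { toFun := fun a => Finsupp.ofSupportFinite _ (hfin a)
      map_add' := by
        intro a b
        ext i
        change m.mkQ (((a : R) + b) * y ^ i.down * e) =
          m.mkQ ((a : R) * y ^ i.down * e) + m.mkQ ((b : R) * y ^ i.down * e)
        rw [add_mul, add_mul, map_add]
      map_smul' := by
        intro c a
        ext i
        change m.mkQ ((c * (a : R)) * y ^ i.down * e) = c • m.mkQ ((a : R) * y ^ i.down * e)
        rw [← map_smul, smul_eq_mul, mul_assoc c, mul_assoc c] }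
  obtain ⟨f, hf⟩ := h (R ⧸ m) hS (ULift.{u} ℕ) I R I.subtype I.injective_subtype g
  have : Infinite (ULift.{u} ℕ) := inferInstance
  obtain ⟨i, hi⟩ := Infinite.exists_notMem_finset (f 1).support
  have hmem : e * x ^ i.down ∈ I := ⟨i.down + 1, fun j hj => hz _ _ hj⟩
  have h1 := DFunLike.congr_fun (hf ⟨_, hmem⟩) i
  have h2 : g ⟨_, hmem⟩ i = m.mkQ e := by
    change m.mkQ (e * x ^ i.down * y ^ i.down * e) = _
    rw [hd]
  have h3 : f (e * x ^ i.down) i = 0 := by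
    have : f (e * x ^ i.down) = (e * x ^ i.down) • f 1 := by
      rw [← map_smul, smul_eq_mul, mul_one]
    rw [this, Finsupp.smul_apply, Finsupp.notMem_support_iff.mp hi, smul_zero]
  have h4 : m.mkQ e = 0 := by
    rw [← h2, ← h1]
    exact h3
  exact hem ((Submodule.Quotient.mk_eq_zero m).mp h4)
end

section
/- Let R be a ℤ-graded unital ring in which every finitely generated homogeneous right ideal is generated by a homogeneous idempotent (this holds, e.g., when R is graded von Neumann regular). Let A be a homogeneous right ideal of R that is countably generated but not finitely generated. Then there exists a sequence (eₙ)_{n ≥ 1} of pairwise orthogonal homogeneous idempotents in A (i.e., eₙ² = eₙ, each eₙ homogeneous, and eₘeₙ = 0 for m ≠ n) such that A is the internal direct sum A = ⊕_{n ≥ 1} eₙR of the right ideals eₙR. -/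
theorem mem_rspan {R : Type*} [Ring R] (y x : R) :
    x ∈ Submodule.span Rᵐᵒᵖ ({y} : Set R) ↔ ∃ r, y * r = x := by
  rw [Submodule.mem_span_singleton]
  constructor
  · rintro ⟨r, rfl⟩
    exact ⟨r.unop, rfl⟩
  · rintro ⟨r, rfl⟩
    exact ⟨MulOpposite.op r, rfl⟩

theorem mul_mem_right_sub {R : Type*} [Ring R] (A : Submodule Rᵐᵒᵖ R) {x : R} (hx : x ∈ A)
    (r : R) : x * r ∈ A := A.smul_mem (MulOpposite.op r) hx

theorem idem_mem_zero {R : Type*} [Ring R] (𝒜 : ℤ → AddSubgroup R) [GradedRing 𝒜]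
    (e : R) (he : e * e = e) (i : ℤ) (hi : e ∈ 𝒜 i) : e ∈ 𝒜 0 := by
  by_cases h0 : e = 0
  · rw [h0]; exact zero_mem _
  have h2 : e ∈ 𝒜 (i + i) := by
    have := SetLike.mul_mem_graded hi hi
    rwa [he] at this
  have h3 : i = i + i := DirectSum.degree_eq_of_mem_mem 𝒜 hi h2 h0
  have h4 : i = 0 := by omega
  rwa [h4] at hi

theorem step_idem {R : Type*} [Ring R] (𝒜 : ℤ → AddSubgroup R) [GradedRing 𝒜]
    (hreg : ∀ I : Submodule Rᵐᵒᵖ R,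
      (∀ a ∈ I, ∀ n : ℤ, ((DirectSum.decompose 𝒜 a n : 𝒜 n) : R) ∈ I) → I.FG →
        ∃ e : R, e * e = e ∧ (∃ i : ℤ, e ∈ 𝒜 i) ∧ I = Submodule.span Rᵐᵒᵖ ({e} : Set R))
    (A : Submodule Rᵐᵒᵖ R) (e x : R) (he : e * e = e) (he0 : e ∈ 𝒜 0) (heA : e ∈ A)
    (hxA : x ∈ A) (i : ℤ) (hx : x ∈ 𝒜 i) :
    ∃ g, g * g = g ∧ g ∈ 𝒜 0 ∧ g ∈ A ∧ e * g = 0 ∧ g * e = 0 ∧ (e + g) * x = x := by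
  have h1 : (1 - e) ∈ 𝒜 0 := sub_mem SetLike.GradedOne.one_mem he0
  have hy : (1 - e) * x ∈ 𝒜 i := by
    have := SetLike.mul_mem_graded h1 hx
    rwa [zero_add] at this
  obtain ⟨h, hh, ⟨j, hj⟩, hspan⟩ := hreg (Submodule.span Rᵐᵒᵖ {(1 - e) * x}) (by
    intro a ha n
    rw [mem_rspan] at ha ⊢
    obtain ⟨r, rfl⟩ := ha
    refine ⟨(DirectSum.decompose 𝒜 r (n - i) : R), ?_⟩
    rw [← DirectSum.coe_decompose_mul_add_of_left_mem 𝒜 hy]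
    rw [add_sub_cancel]) (Submodule.fg_span_singleton _)
  have hj0 := idem_mem_zero 𝒜 h hh j hj
  have m1 : h ∈ Submodule.span Rᵐᵒᵖ {(1 - e) * x} := by
    rw [hspan]; exact Submodule.mem_span_singleton_self h
  have m2 : (1 - e) * x ∈ Submodule.span Rᵐᵒᵖ {h} := by
    rw [← hspan]; exact Submodule.mem_span_singleton_self _
  rw [mem_rspan] at m1 m2
  obtain ⟨r, hr⟩ := m1
  obtain ⟨s, hs⟩ := m2
  have hee : e * (1 - e) = 0 := by rw [mul_sub, he, mul_one, sub_self]
  have hee' : (1 - e) * e = 0 := by rw [sub_mul, he, one_mul, sub_self]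
  have heh : e * h = 0 := by rw [← hr, ← mul_assoc, ← mul_assoc, hee, zero_mul, zero_mul]
  have hhA : h ∈ A := by
    rw [← hr]
    apply mul_mem_right_sub
    rw [sub_mul, one_mul]
    exact sub_mem hxA (mul_mem_right_sub A heA x)
  have hgh : h * (1 - e) * h = h := by
    rw [mul_assoc, sub_mul, heh, one_mul, sub_zero, hh]
  refine ⟨h * (1 - e), ?_, ?_, mul_mem_right_sub A hhA _, ?_, ?_, ?_⟩
  · rw [← mul_assoc, hgh]
  · have := SetLike.mul_mem_graded hj0 h1
    rwa [zero_add] at this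
  · rw [← mul_assoc, heh, zero_mul]
  · rw [mul_assoc, hee', mul_zero]
  · rw [add_mul, mul_assoc, ← hs, ← mul_assoc, hh, hs, sub_mul, one_mul]
    abel

/-- Let `R` be a `ℤ`-graded unital ring in which every finitely generated homogeneous
right ideal is generated by a homogeneous idempotent (e.g. `R` graded von Neumann
regular).  If `A` is a countably generated but not finitely generated homogeneous right
ideal, then `A = ⊕ₙ eₙR` for a sequence of pairwise orthogonal homogeneous idempotents
`eₙ ∈ A`.  Right ideals are formalized as `Rᵐᵒᵖ`-submodules of `R`; a right ideal `I`
is homogeneous if it contains all homogeneous components of each of its elements. -/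
theorem stmt_11 {R : Type*} [Ring R] (𝒜 : ℤ → AddSubgroup R) [GradedRing 𝒜]
    (hreg : ∀ I : Submodule Rᵐᵒᵖ R,
      (∀ a ∈ I, ∀ n : ℤ, ((DirectSum.decompose 𝒜 a n : 𝒜 n) : R) ∈ I) → I.FG →
        ∃ e : R, e * e = e ∧ (∃ i : ℤ, e ∈ 𝒜 i) ∧ I = Submodule.span Rᵐᵒᵖ ({e} : Set R))
    (A : Submodule Rᵐᵒᵖ R)
    (hA : ∀ a ∈ A, ∀ n : ℤ, ((DirectSum.decompose 𝒜 a n : 𝒜 n) : R) ∈ A)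
    (hcg : ∃ s : Set R, s.Countable ∧ Submodule.span Rᵐᵒᵖ s = A)
    (hnfg : ¬ A.FG) :
    ∃ e : ℕ → R,
      (∀ n, e n ∈ A) ∧
      (∀ n, e n * e n = e n) ∧
      (∀ n, ∃ i : ℤ, e n ∈ 𝒜 i) ∧
      (∀ m n, m ≠ n → e m * e n = 0) ∧
      (⨆ n, Submodule.span Rᵐᵒᵖ ({e n} : Set R)) = A ∧
      (∀ n, Submodule.span Rᵐᵒᵖ ({e n} : Set R) ⊓
        (⨆ m, ⨆ _ : m ≠ n, Submodule.span Rᵐᵒᵖ ({e m} : Set R)) = ⊥) := by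
  classical
  obtain ⟨s, hsc, hs⟩ := hcg
  obtain ⟨t, ht⟩ := (hsc.insert 0).exists_eq_range (Set.insert_nonempty 0 s)
  obtain ⟨p, hp⟩ := exists_surjective_nat (ℕ × ℤ)
  have htA : ∀ n, t n ∈ A := by
    intro n
    have : t n ∈ insert 0 s := ht ▸ Set.mem_range_self n
    rcases this with h | h
    · rw [h]; exact zero_mem _
    · rw [← hs]; exact Submodule.subset_span h
  let a : ℕ → R := fun k => (DirectSum.decompose 𝒜 (t (p k).1) (p k).2 : R)
  have haA : ∀ k, a k ∈ A := fun k => hA _ (htA _) _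
  have hah : ∀ k, a k ∈ 𝒜 (p k).2 := fun k => SetLike.coe_mem _
  let T := {e : R // e * e = e ∧ e ∈ 𝒜 0 ∧ e ∈ A}
  have hstep : ∀ (k : ℕ) (e : T), ∃ g : R, g * g = g ∧ g ∈ 𝒜 0 ∧ g ∈ A ∧ e.1 * g = 0 ∧
      g * e.1 = 0 ∧ (e.1 + g) * a k = a k := fun k e =>
    step_idem 𝒜 hreg A e.1 (a k) e.2.1 e.2.2.1 e.2.2.2 (haA k) _ (hah k)
  choose G hG1 hG2 hG3 hG4 hG5 hG6 using hstep
  let f : ℕ → T := fun n => Nat.rec ⟨0, by simp, zero_mem _, zero_mem _⟩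
    (fun k e => ⟨e.1 + G k e, by
      rw [add_mul, mul_add, mul_add, e.2.1, hG1, hG4, hG5]; simp,
      add_mem e.2.2.1 (hG2 k e), add_mem e.2.2.2 (hG3 k e)⟩) n
  have f0 : (f 0).1 = 0 := rfl
  have fs : ∀ n, (f (n + 1)).1 = (f n).1 + G n (f n) := fun n => rfl
  have hff : ∀ n m, n ≤ m → (f m).1 * (f n).1 = (f n).1 ∧ (f n).1 * (f m).1 = (f n).1 := by
    intro n m hnm
    induction m, hnm using Nat.le_induction with
    | base => exact ⟨(f n).2.1, (f n).2.1⟩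
    | succ m _ ih =>
      rw [fs, add_mul, mul_add, ih.1, ih.2]
      have e1 : G m (f m) * (f n).1 = 0 := by
        rw [← ih.1, ← mul_assoc, hG5, zero_mul]
      have e2 : (f n).1 * G m (f m) = 0 := by
        rw [← ih.2, mul_assoc, hG4, mul_zero]
      rw [e1, e2]; simp
  have hfg : ∀ n m, n ≤ m → (f n).1 * G m (f m) = 0 ∧ G m (f m) * (f n).1 = 0 := by
    intro n m hnm
    obtain ⟨h1, h2⟩ := hff n m hnm
    constructor
    · rw [← h2, mul_assoc, hG4, mul_zero]
    · rw [← h1, ← mul_assoc, hG5, zero_mul]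
  have hg : ∀ n, G n (f n) = (f (n + 1)).1 - (f n).1 := fun n => by rw [fs]; abel
  have hlt : ∀ n m, n < m → G n (f n) * G m (f m) = 0 ∧ G m (f m) * G n (f n) = 0 := by
    intro n m hnm
    rw [hg n, sub_mul, mul_sub, (hfg _ _ hnm).1, (hfg _ _ hnm).2, (hfg _ _ hnm.le).1,
      (hfg _ _ hnm.le).2]
    simp
  have horth : ∀ m n, m ≠ n → G m (f m) * G n (f n) = 0 := by
    intro m n hmn
    rcases lt_or_gt_of_ne hmn with h | h
    · exact (hlt m n h).1
    · exact (hlt n m h).2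
  refine ⟨fun n => G n (f n), fun n => hG3 _ _, fun n => hG1 _ _, fun n => ⟨0, hG2 _ _⟩,
    horth, ?_, ?_⟩
  · apply le_antisymm
    · refine iSup_le fun n => ?_
      rw [Submodule.span_singleton_le_iff_mem]
      exact hG3 _ _
    · have hfm : ∀ n, (f n).1 ∈ ⨆ n, Submodule.span Rᵐᵒᵖ ({G n (f n)} : Set R) := by
        intro n
        induction n with
        | zero => rw [f0]; exact zero_mem _
        | succ n ih =>
          rw [fs]
          exact add_mem ih (Submodule.mem_iSup_of_mem n (Submodule.mem_span_singleton_self _))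
      have ham : ∀ k, a k ∈ ⨆ n, Submodule.span Rᵐᵒᵖ ({G n (f n)} : Set R) := by
        intro k
        have h := mul_mem_right_sub _ (hfm (k + 1)) (a k)
        rw [fs, hG6 k (f k)] at h
        exact h
      rw [← hs, Submodule.span_le]
      intro x hx
      have : x ∈ Set.range t := ht ▸ Set.mem_insert_of_mem 0 hx
      obtain ⟨n, rfl⟩ := this
      rw [SetLike.mem_coe, ← DirectSum.sum_support_decompose 𝒜 (t n)]
      refine sum_mem fun i _ => ?_
      have hq : ∀ q : ℕ × ℤ, (DirectSum.decompose 𝒜 (t q.1) q.2 : R) ∈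
          ⨆ n, Submodule.span Rᵐᵒᵖ ({G n (f n)} : Set R) := by
        intro q
        obtain ⟨k, rfl⟩ := hp q
        exact ham k
      exact hq (n, i)
  · intro n
    rw [eq_bot_iff]
    rintro x ⟨hx1, hx2⟩
    obtain ⟨r, hr⟩ := (mem_rspan _ _).1 hx1
    let L : R →ₗ[Rᵐᵒᵖ] R :=
      { toFun := fun y => G n (f n) * y
        map_add' := fun y z => mul_add _ _ _
        map_smul' := fun c y => (mul_assoc _ _ _).symm }
    have hle : (⨆ m, ⨆ _ : m ≠ n, Submodule.span Rᵐᵒᵖ ({G m (f m)} : Set R)) ≤ LinearMap.ker L := by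
      refine iSup_le fun m => iSup_le fun hm => ?_
      rw [Submodule.span_singleton_le_iff_mem]
      exact horth n m hm.symm
    have h0 : G n (f n) * x = 0 := hle hx2
    rw [← hr, ← mul_assoc, hG1, hr] at h0
    exact h0
end

section
/- Let R be a unital ring such that every simple left R-module is injective (i.e., R is a left V-ring). Then R is left weakly regular: I² = I for every left ideal I of R, where I² denotes the left ideal generated by all products ab with a, b ∈ I. -/
universe u

/-- If every simple left `R`-module is injective (`R` is a left V-ring), then `R` is
left weakly regular: `I² = I` for every left ideal `I` of `R`, where `I²` is the
left ideal generated by all products `a*b` with `a, b ∈ I`.  Left ideals are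
formalized as `R`-submodules of `R`. -/
theorem stmt_13 {R : Type u} [Ring R]
    (hV : ∀ (S : Type u) [AddCommGroup S] [Module R S], IsSimpleModule R S →
      IsInjectiveModule R S) :
    ∀ I : Submodule R R,
      Submodule.span R {z : R | ∃ a ∈ I, ∃ b ∈ I, z = a * b} = I := by
  intro I
  apply le_antisymm
  · rw [Submodule.span_le]
    rintro z ⟨a, -, b, hb, rfl⟩
    exact I.smul_mem a hb
  intro a ha
  set J : Submodule R R := Submodule.span R {z : R | ∃ a ∈ I, ∃ b ∈ I, z = a * b} with hJ
  by_contra haJ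
  let T : Submodule R (R ⧸ J) := Submodule.span R {J.mkQ a}
  have haT : J.mkQ a ∈ T := Submodule.mem_span_singleton_self _
  let t : T := ⟨J.mkQ a, haT⟩
  have ht : t ≠ 0 := by
    intro h
    have h1 : J.mkQ a = 0 := congrArg Subtype.val h
    exact haJ (by simpa using h1)
  have hgen : ∀ x : T, ∃ r : R, r • t = x := by
    rintro ⟨x, hx⟩
    obtain ⟨r, hr⟩ := Submodule.mem_span_singleton.1 hx
    exact ⟨r, Subtype.ext hr⟩
  haveI : Module.Finite R T := Module.Finite.span_singleton R _
  have hne : (⊥ : Submodule R T) ≠ ⊤ := by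
    intro h
    have h1 : t ∈ (⊥ : Submodule R T) := h ▸ Submodule.mem_top
    exact ht (by simpa using h1)
  obtain ⟨M, hM, -⟩ := (eq_top_or_exists_le_coatom (⊥ : Submodule R T)).resolve_left hne
  have hS : IsSimpleModule R (T ⧸ M) := isSimpleModule_iff_isCoatom.2 hM
  obtain ⟨h, hh⟩ := hV (T ⧸ M) hS T (R ⧸ J) T.subtype T.injective_subtype M.mkQ
  have hht : h (J.mkQ a) = M.mkQ t := hh t
  obtain ⟨x, hx⟩ := M.mkQ_surjective (h (J.mkQ 1))
  obtain ⟨r, rfl⟩ := hgen x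
  have key : ∀ y : R, h (J.mkQ y) = y • h (J.mkQ 1) := by
    intro y
    rw [← map_smul, ← map_smul, smul_eq_mul, mul_one]
  have h0 : J.mkQ (a * (r * a)) = 0 := by
    have : a * (r * a) ∈ J :=
      Submodule.subset_span ⟨a, ha, r * a, I.smul_mem r ha, rfl⟩
    simpa using this
  have hzero : M.mkQ t = 0 := by
    rw [← hht, key a, ← hx, map_smul, ← hht, ← map_smul, ← map_smul, ← map_smul, ← map_smul,
      smul_eq_mul, smul_eq_mul, h0, map_zero]
  have htM : t ∈ M := by simpa using hzero
  apply hM.1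
  rw [eq_top_iff]
  intro x _
  obtain ⟨r, rfl⟩ := hgen x
  exact M.smul_mem r htM
end

section
/- Let R be a unital ring such that every simple left R-module is injective (i.e., R is a left V-ring). Then every proper left ideal I of R is the intersection of the maximal left ideals of R containing I. -/
universe u

/-- Villamayor's theorem: if every simple left `R`-module is injective (`R` is a left
V-ring), then every proper left ideal of `R` is the intersection of the maximal left
ideals containing it.  Left ideals are formalized as `R`-submodules of `R`; maximal
left ideals are the coatoms of the lattice of left ideals. -/
theorem stmt_14 {R : Type u} [Ring R]
    (hV : ∀ (S : Type u) [AddCommGroup S] [Module R S], IsSimpleModule R S →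
      IsInjectiveModule R S) :
    ∀ I : Submodule R R, I ≠ ⊤ →
      I = sInf {M : Submodule R R | I ≤ M ∧ IsCoatom M} := by
  intro I hI
  apply le_antisymm
  · exact le_sInf fun M hM => hM.1
  intro x hx
  by_contra hxI
  let φ : R →ₗ[R] (R ⧸ I) := LinearMap.toSpanSingleton R (R ⧸ I) (I.mkQ x)
  have hφ1 : φ 1 = I.mkQ x := by simp [φ]
  have hy : I.mkQ x ≠ 0 := by
    simpa [Submodule.Quotient.mk_eq_zero] using hxI
  have hK : LinearMap.ker φ ≠ ⊤ := by
    intro h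
    have h1 : (1 : R) ∈ LinearMap.ker φ := by rw [h]; trivial
    rw [LinearMap.mem_ker, hφ1] at h1
    exact hy h1
  obtain ⟨m, hm, hKm⟩ := Ideal.exists_le_maximal (LinearMap.ker φ) hK
  have hmc : IsCoatom (m : Submodule R R) := hm.out
  have hS : IsSimpleModule R (R ⧸ (m : Submodule R R)) := isSimpleModule_iff_isCoatom.2 hmc
  let f : (R ⧸ LinearMap.ker φ) →ₗ[R] (R ⧸ I) := (LinearMap.ker φ).liftQ φ le_rfl
  have hf : Function.Injective f := by
    rw [← LinearMap.ker_eq_bot]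
    exact Submodule.ker_liftQ_eq_bot _ _ _ le_rfl
  let g : (R ⧸ LinearMap.ker φ) →ₗ[R] (R ⧸ (m : Submodule R R)) := Submodule.factor hKm
  obtain ⟨h, hh⟩ := hV (R ⧸ (m : Submodule R R)) hS _ _ f hf g
  have key : h (I.mkQ x) = (Submodule.mkQ (m : Submodule R R)) 1 := by
    have h2 := hh ((LinearMap.ker φ).mkQ 1)
    have h3 : f ((LinearMap.ker φ).mkQ 1) = I.mkQ x := hφ1
    rw [h3] at h2
    exact h2
  have hne : (Submodule.mkQ (m : Submodule R R)) 1 ≠ 0 := by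
    intro h0
    rw [Submodule.mkQ_apply, Submodule.Quotient.mk_eq_zero] at h0
    exact hmc.1 ((Ideal.eq_top_iff_one m).2 h0)
  let ψ : R →ₗ[R] (R ⧸ (m : Submodule R R)) := h ∘ₗ I.mkQ
  have hψx : ψ x ≠ 0 := by
    change h (I.mkQ x) ≠ 0
    rw [key]; exact hne
  have hψ : ψ ≠ 0 := fun h0 => hψx (by rw [h0]; rfl)
  have hsurj : Function.Surjective ψ := LinearMap.surjective_of_ne_zero hψ
  have hco : IsCoatom (LinearMap.ker ψ) := by
    rw [← isSimpleModule_iff_isCoatom]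
    exact IsSimpleModule.congr (ψ.quotKerEquivOfSurjective hsurj)
  have hIle : I ≤ LinearMap.ker ψ := by
    intro a ha
    have : I.mkQ a = 0 := by simpa [Submodule.Quotient.mk_eq_zero] using ha
    rw [LinearMap.mem_ker]
    change h (I.mkQ a) = 0
    rw [this, map_zero]
  exact hψx (LinearMap.mem_ker.1 ((Submodule.mem_sInf.1 hx) _ ⟨hIle, hco⟩))
end
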